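/- Assume J̄ < ∞, J_1 > 0, J is of order α ∈ (0,∞], and p ≥ 1 + 4α′/d. Then ν₀ > 0; equivalently, there exists a constant C > 0 such that Σ_n |u_n|^{p+1} ≤ C · M[u]^{(p−1)/2} ⟨Lu,u⟩ for every u ∈ ℓ²(Z^d). -/

import Mathlib

open scoped BigOperators
open Filter Topology

noncomputable section

/-- The `ℓ^∞` norm of a lattice point of `ℤ^d`, as a natural number. -/
def latNorm {d : ℕ} (m : Fin d → ℤ) : ℕ := Finset.univ.sup fun i => (m i).natAbs

/-- The summand `J_{|m|}` for `m ≠ 0` (and `0` for `m = 0`). -/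
def JbarSummand (d : ℕ) (J : ℕ → ℝ) (m : Fin d → ℤ) : ℝ :=
  if m = 0 then 0 else J (latNorm m)

/-- `J̄ = Σ_{m ≠ 0} J_{|m|}`. -/
def Jbar (d : ℕ) (J : ℕ → ℝ) : ℝ := ∑' m : Fin d → ℤ, JbarSummand d J m

/-- The quadratic form `⟨Lu,u⟩ = (1/2) Σ_n Σ_{m ≠ n} J_{|n-m|} |u_n - u_m|²`. -/
def pairing (d : ℕ) (J : ℕ → ℝ) (u : (Fin d → ℤ) → ℂ) : ℝ :=
  (1/2) * ∑' n : Fin d → ℤ, ∑' m : Fin d → ℤ,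
    if m = n then 0 else J (latNorm (n - m)) * ‖u n - u m‖ ^ 2

/-- The mass `M[u] = Σ_n |u_n|²`. -/
def mass (d : ℕ) (u : (Fin d → ℤ) → ℂ) : ℝ := ∑' n : Fin d → ℤ, ‖u n‖ ^ 2

/-- Membership in `ℓ²(ℤ^d)`. -/
def MemL2 (d : ℕ) (u : (Fin d → ℤ) → ℂ) : Prop := Summable fun n : Fin d → ℤ => ‖u n‖ ^ 2

/-- The potential term `Σ_n |u_n|^{p+1}`. -/
def ppot (d : ℕ) (p : ℝ) (u : (Fin d → ℤ) → ℂ) : ℝ := ∑' n : Fin d → ℤ, ‖u n‖ ^ (p + 1)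

/-- The energy `H[u] = (1/2)⟨Lu,u⟩ - (1/(p+1)) Σ_n |u_n|^{p+1}`. -/
def energy (d : ℕ) (J : ℕ → ℝ) (p : ℝ) (u : (Fin d → ℤ) → ℂ) : ℝ :=
  (1/2) * pairing d J u - (1/(p+1)) * ppot d p u

/-- `I_ν = inf {H[q] : q ∈ ℓ², M[q] = ν}`. -/
def Ifun (d : ℕ) (J : ℕ → ℝ) (p : ℝ) (ν : ℝ) : ℝ :=
  sInf {x : ℝ | ∃ q, MemL2 d q ∧ mass d q = ν ∧ energy d J p q = x}

open scoped ENNReal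
/-- `J` is of order `α ∈ (0,∞]`: for finite `α`, `k^{d+α} J_k` tends to a finite positive
limit; for `α = ∞`, `k^{d+β} J_k → 0` for every `β > 0`. -/
def JOrder (d : ℕ) (J : ℕ → ℝ) (α : ℝ≥0∞) : Prop :=
  if α = ⊤ then
    ∀ β : ℝ, 0 < β → Tendsto (fun k : ℕ => (k : ℝ) ^ ((d : ℝ) + β) * J k) atTop (𝓝 0)
  else
    ∃ A : ℝ, 0 < A ∧ Tendsto (fun k : ℕ => (k : ℝ) ^ ((d : ℝ) + α.toReal) * J k) atTop (𝓝 A)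

/-- `α′ = α/2` for `α ∈ (0,2)` and `α′ = 1` for `α ∈ [2,∞]`. -/
def alphaPrime (α : ℝ≥0∞) : ℝ := if α < 2 then α.toReal / 2 else 1

/-- The Gagliardo–Nirenberg-type inequality at mass level `ν`:
`Σ_n |q_n|^{p+1} ≤ ((p+1)/2) ν^{-(p-1)/2} M[q]^{(p-1)/2} ⟨Lq,q⟩` for all `q ∈ ℓ²`. -/
def GNineq (d : ℕ) (J : ℕ → ℝ) (p ν : ℝ) : Prop :=
  ∀ q : (Fin d → ℤ) → ℂ, MemL2 d q →
    ppot d p q ≤ ((p + 1) / 2) * ν ^ (-(p - 1) / 2) * (mass d q) ^ ((p - 1) / 2) *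
      pairing d J q

/-- The excitation threshold `ν₀ = sup {ν > 0 : GN inequality holds at level ν}`,
with `ν₀ = 0` if no such `ν` exists. -/
def nuZero (d : ℕ) (J : ℕ → ℝ) (p : ℝ) : ℝ :=
  sSup (insert 0 {ν : ℝ | 0 < ν ∧ GNineq d J p ν})

/-!
A pseudo-Poincaré inequality, bounding the average of `‖u(· + h) - u‖²` over about `t` jumps `h` by
`C t ^ σ` times the energy, already contains a Gagliardo–Nirenberg inequality. Let `M` be the mass
of `u`. Where `‖u‖ ≥ x`, averaging at a scale `t` comparable to `M / x²` forces `u` to drop below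
`x / 2` along at least half of the jumps, so `x ^ (2 + 2σ) #{‖u‖ ≥ x}` is at most a constant times
`M ^ σ` times the energy. Applied to the part of `‖u‖` between the levels `x / 2` and `x`, and
summed over dyadic `x`, this bounds `∑ ‖u‖ ^ (2 + 2σ)`, because the energies of the dyadic parts add
up to at most the energy of `u`. The larger exponent `p + 1` costs only powers of `sup ‖u‖² ≤ M`.

On `ℤ^d` with `α < 2` the tail of the kernel connects directly all sites at distance `t ^ (1 / d)`,
and `σ = α / d`. For `α ≥ 2` one chains about `t ^ (1 / d)` hops of one fixed length instead, and
Cauchy–Schwarz along the chain gives `σ = 2 / d`.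
-/

open scoped NNReal

section Energy

variable {G E : Type*} [SeminormedAddCommGroup E]

/-- The squared `ℓ²` norm of `u`, with value `∞` outside `ℓ²`. -/
def eMass (u : G → E) : ℝ≥0∞ := ∑' n, ‖u n‖ₑ ^ 2

lemma tsum_enorm_rpow_le_eMass_rpow_mul (u : G → E) {q r : ℝ} (hr : 0 ≤ r) (hrq : r ≤ q) :
    ∑' n, ‖u n‖ₑ ^ q ≤ eMass u ^ ((q - r) / 2) * ∑' n, ‖u n‖ₑ ^ r := by
  rw [← ENNReal.tsum_mul_left]
  refine ENNReal.tsum_le_tsum fun n => ?_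
  calc ‖u n‖ₑ ^ q = (‖u n‖ₑ ^ 2) ^ ((q - r) / 2) * ‖u n‖ₑ ^ r := by
        rw [← ENNReal.rpow_ofNat, ← ENNReal.rpow_mul, mul_div_cancel₀ _ two_ne_zero,
          ← ENNReal.rpow_add_of_nonneg _ _ (sub_nonneg.mpr hrq) hr, sub_add_cancel]
    _ ≤ eMass u ^ ((q - r) / 2) * ‖u n‖ₑ ^ r := by
        have : 0 ≤ (q - r) / 2 := div_nonneg (sub_nonneg.mpr hrq) zero_le_two
        gcongr
        exact ENNReal.le_tsum n

variable [AddGroup G]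

/-- The squared `ℓ²` distance between `u` and its translate by `h`. -/
def shiftEnergy (u : G → E) (h : G) : ℝ≥0∞ := ∑' n, ‖u (n + h) - u n‖ₑ ^ 2

/-- Twice the Dirichlet form of the translation-invariant jump kernel `w`, organised by jumps.
Values in `[0, ∞]` make all interchanges of sums unconditional. -/
def jumpEnergy (w : G → ℝ≥0∞) (u : G → E) : ℝ≥0∞ := ∑' h, w h * shiftEnergy u h

lemma eMass_translate (u : G → E) (n : G) : ∑' h, ‖u (n + h)‖ₑ ^ 2 = eMass u :=
  (Equiv.addLeft n).tsum_eq fun m => ‖u m‖ₑ ^ 2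

lemma enorm_sub_sq_le (a b : E) : ‖a - b‖ₑ ^ 2 ≤ 2 * (‖a‖ₑ ^ 2 + ‖b‖ₑ ^ 2) := by
  have h : ‖a - b‖₊ ^ 2 ≤ 2 * (‖a‖₊ ^ 2 + ‖b‖₊ ^ 2) := by
    calc ‖a - b‖₊ ^ 2 ≤ (‖a‖₊ + ‖b‖₊) ^ 2 := by gcongr; exact nnnorm_sub_le a b
      _ ≤ 2 * (‖a‖₊ ^ 2 + ‖b‖₊ ^ 2) := add_sq_le
  simp only [enorm_eq_nnnorm]
  exact_mod_cast h

lemma shiftEnergy_le_four_mul_eMass (u : G → E) (h : G) : shiftEnergy u h ≤ 4 * eMass u := by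
  have translate : ∑' n, ‖u (n + h)‖ₑ ^ 2 = eMass u :=
    (Equiv.addRight h).tsum_eq fun m => ‖u m‖ₑ ^ 2
  calc shiftEnergy u h ≤ ∑' n, 2 * (‖u (n + h)‖ₑ ^ 2 + ‖u n‖ₑ ^ 2) :=
        ENNReal.tsum_le_tsum fun _ => enorm_sub_sq_le _ _
    _ = 2 * (eMass u + eMass u) := by
        rw [ENNReal.tsum_mul_left, ENNReal.tsum_add, translate, eMass]
    _ = 4 * eMass u := by ring

lemma jumpEnergy_ne_top {w : G → ℝ≥0∞} {u : G → E} (hw : ∑' h, w h ≠ ∞) (hu : eMass u ≠ ∞) :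
    jumpEnergy w u ≠ ∞ := by
  have bound : jumpEnergy w u ≤ (∑' h, w h) * (4 * eMass u) := by
    rw [← ENNReal.tsum_mul_right]
    exact ENNReal.tsum_le_tsum fun h => mul_le_mul_right (shiftEnergy_le_four_mul_eMass u h) _
  exact ne_top_of_le_ne_top (by finiteness) bound

lemma sum_shiftEnergy_le {w : G → ℝ≥0∞} {B : Finset G} {c : ℝ≥0∞}
    (hB : ∀ h ∈ B, 1 ≤ c * w h) (u : G → E) :
    ∑ h ∈ B, shiftEnergy u h ≤ c * jumpEnergy w u := by
  calc ∑ h ∈ B, shiftEnergy u h ≤ ∑ h ∈ B, c * (w h * shiftEnergy u h) :=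
        Finset.sum_le_sum fun h hh => by
          rw [← mul_assoc]; exact le_mul_of_one_le_left zero_le (hB h hh)
    _ = c * ∑ h ∈ B, w h * shiftEnergy u h := (Finset.mul_sum _ _ _).symm
    _ ≤ c * jumpEnergy w u := mul_le_mul_right (ENNReal.sum_le_tsum B) _

lemma shiftEnergy_le_of_path (u : G → E) {g : ℕ → G} (hg : g 0 = 0) (R : ℕ) :
    shiftEnergy u (g R) ≤ R * ∑ j ∈ Finset.range R, shiftEnergy u (-g j + g (j + 1)) := by
  have pointwise (n : G) : ‖u (n + g R) - u n‖ₑ ^ 2 ≤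
      R * ∑ j ∈ Finset.range R, ‖u (n + g (j + 1)) - u (n + g j)‖ₑ ^ 2 := by
    have telescope :
        u (n + g R) - u n = ∑ j ∈ Finset.range R, (u (n + g (j + 1)) - u (n + g j)) := by
      rw [Finset.sum_range_sub (fun j => u (n + g j)), hg, add_zero]
    have cauchy : (∑ j ∈ Finset.range R, ‖u (n + g (j + 1)) - u (n + g j)‖ₑ) ^ 2 ≤
        R * ∑ j ∈ Finset.range R, ‖u (n + g (j + 1)) - u (n + g j)‖ₑ ^ 2 := by
      simpa [show (2 : ℝ) - 1 = 1 by norm_num] using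
        ENNReal.rpow_sum_le_const_mul_sum_rpow (Finset.range R)
          (fun j => ‖u (n + g (j + 1)) - u (n + g j)‖ₑ) one_le_two
    calc ‖u (n + g R) - u n‖ₑ ^ 2
        ≤ (∑ j ∈ Finset.range R, ‖u (n + g (j + 1)) - u (n + g j)‖ₑ) ^ 2 := by
          rw [telescope]
          gcongr
          simp only [enorm_eq_nnnorm]
          exact_mod_cast nnnorm_sum_le (Finset.range R) _
      _ ≤ R * ∑ j ∈ Finset.range R, ‖u (n + g (j + 1)) - u (n + g j)‖ₑ ^ 2 := cauchy
  have translate (j : ℕ) :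
      ∑' n, ‖u (n + g (j + 1)) - u (n + g j)‖ₑ ^ 2 = shiftEnergy u (-g j + g (j + 1)) := by
    simpa only [shiftEnergy, Equiv.coe_addRight, add_assoc, add_neg_cancel_left] using
      (Equiv.addRight (g j)).tsum_eq fun n => ‖u (n + (-g j + g (j + 1))) - u n‖ₑ ^ 2
  calc shiftEnergy u (g R)
      ≤ ∑' n, R * ∑ j ∈ Finset.range R, ‖u (n + g (j + 1)) - u (n + g j)‖ₑ ^ 2 :=
        ENNReal.tsum_le_tsum pointwise
    _ = R * ∑ j ∈ Finset.range R, shiftEnergy u (-g j + g (j + 1)) := by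
        rw [ENNReal.tsum_mul_left, Summable.tsum_finsetSum fun _ _ => ENNReal.summable]
        simp only [translate]

end Energy

section Truncation

/-- The part of `r` lying between the levels `x / 2` and `x`. -/
def slab (x r : ℝ) : ℝ := min r x - min r (x / 2)

lemma sum_sub_pred_le_of_monotone {f : ℤ → ℝ} (hf : Monotone f) {l b : ℝ} (hl : ∀ k, l ≤ f k)
    (hb : ∀ k, f k ≤ b) (F : Finset ℤ) : ∑ k ∈ F, (f k - f (k - 1)) ≤ b - l := by
  suffices below : ∀ m, (∀ k ∈ F, k ≤ m) → ∑ k ∈ F, (f k - f (k - 1)) ≤ f m - l by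
    obtain ⟨m, hm⟩ := F.bddAbove
    exact (below m hm).trans (sub_le_sub_right (hb m) l)
  induction F using Finset.induction_on_max with
  | empty => exact fun m _ => sub_nonneg.mpr (hl m)
  | insert a s hs ih =>
    intro m hm
    rw [Finset.sum_insert fun h => lt_irrefl _ (hs a h)]
    have head : f a ≤ f m := hf (hm a (Finset.mem_insert_self _ _))
    have tail := ih (a - 1) fun k hk => Int.le_sub_one_of_lt (hs k hk)
    linarith

lemma sum_sq_slab_sub_le {a b : ℝ} (hab : b ≤ a) (F : Finset ℤ) :
    ∑ k ∈ F, (slab (2 ^ k) a - slab (2 ^ k) b) ^ 2 ≤ (a - b) ^ 2 := by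
  let f : ℤ → ℝ := fun k => min a (2 ^ k) - min b (2 ^ k)
  have mono : Monotone f := by
    intro k l hkl
    have : (2 : ℝ) ^ k ≤ 2 ^ l := zpow_le_zpow_right₀ one_le_two hkl
    grind
  have nonneg (k : ℤ) : 0 ≤ f k := by grind
  have le_sub (k : ℤ) : f k ≤ a - b := by grind
  have increment (k : ℤ) : slab (2 ^ k) a - slab (2 ^ k) b = f k - f (k - 1) := by
    simp only [slab, f, zpow_sub_one₀ (two_ne_zero' ℝ), ← div_eq_mul_inv]
    ring
  have increment_nonneg (k : ℤ) : 0 ≤ f k - f (k - 1) := sub_nonneg.mpr (mono (by omega))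
  simp only [increment]
  calc ∑ k ∈ F, (f k - f (k - 1)) ^ 2 ≤ (∑ k ∈ F, (f k - f (k - 1))) ^ 2 :=
        Finset.sum_sq_le_sq_sum_of_nonneg fun k _ => increment_nonneg k
    _ ≤ (a - b) ^ 2 := by
        refine pow_le_pow_left₀ (Finset.sum_nonneg fun k _ => increment_nonneg k) ?_ 2
        simpa only [sub_zero] using sum_sub_pred_le_of_monotone mono nonneg le_sub F

lemma tsum_enorm_slab_sub_sq_le (a b : ℝ) :
    ∑' k : ℤ, ‖slab (2 ^ k) a - slab (2 ^ k) b‖ₑ ^ 2 ≤ ‖a - b‖ₑ ^ 2 := by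
  wlog hab : b ≤ a generalizing a b
  · simpa only [enorm_sub_rev] using this b a (le_of_not_ge hab)
  have enorm_sq (r : ℝ) : ‖r‖ₑ ^ 2 = ENNReal.ofReal (r ^ 2) := by
    rw [← enorm_pow, Real.enorm_of_nonneg (sq_nonneg r)]
  simp only [enorm_sq]
  refine ENNReal.summable.tsum_le_of_sum_le fun F => ?_
  rw [← ENNReal.ofReal_sum_of_nonneg fun _ _ => sq_nonneg _]
  exact ENNReal.ofReal_le_ofReal (sum_sq_slab_sub_le hab F)

variable {G E : Type*} [AddGroup G] [SeminormedAddCommGroup E]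

lemma tsum_shiftEnergy_slab_le (u : G → E) (h : G) :
    ∑' k : ℤ, shiftEnergy (fun n => slab (2 ^ k) ‖u n‖) h ≤ shiftEnergy u h := by
  have enorm_norm_sub_le (x y : E) : ‖‖x‖ - ‖y‖‖ₑ ≤ ‖x - y‖ₑ :=
    enorm_le_iff_norm_le.mpr (abs_norm_sub_norm_le x y)
  simp only [shiftEnergy]
  rw [ENNReal.tsum_comm]
  exact ENNReal.tsum_le_tsum fun n =>
    (tsum_enorm_slab_sub_sq_le _ _).trans (pow_le_pow_left' (enorm_norm_sub_le _ _) 2)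

lemma tsum_jumpEnergy_slab_le (w : G → ℝ≥0∞) (u : G → E) :
    ∑' k : ℤ, jumpEnergy w (fun n => slab (2 ^ k) ‖u n‖) ≤ jumpEnergy w u := by
  simp only [jumpEnergy]
  rw [ENNReal.tsum_comm]
  simp only [ENNReal.tsum_mul_left]
  exact ENNReal.tsum_le_tsum fun h => mul_le_mul_right (tsum_shiftEnergy_slab_le u h) _

end Truncation

section GagliardoNirenberg

variable {G E : Type*} [SeminormedAddCommGroup E]

lemma enorm_rpow_le_tsum_indicator (u : G → E) {q : ℝ} (hq : 0 < q) (n : G) :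
    ‖u n‖ₑ ^ q ≤ ∑' k : ℤ, {n | 2 ^ k ≤ ‖u n‖₊}.indicator
      (fun _ => 2 ^ q * ((2 ^ k : ℝ≥0) : ℝ≥0∞) ^ q) n := by
  rcases eq_or_ne ‖u n‖₊ 0 with h0 | h0
  · rw [enorm_eq_nnnorm, h0, ENNReal.coe_zero, ENNReal.zero_rpow_of_pos hq]
    exact zero_le
  obtain ⟨k, hk_le, hk_lt⟩ := NNReal.exists_mem_Ico_zpow h0 one_lt_two
  refine le_trans ?_ (ENNReal.le_tsum k)
  have double : ‖u n‖ₑ ≤ 2 * ((2 ^ k : ℝ≥0) : ℝ≥0∞) := by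
    rw [zpow_add_one₀ two_ne_zero, mul_comm] at hk_lt
    exact_mod_cast ENNReal.coe_le_coe.mpr hk_lt.le
  rw [Set.indicator_of_mem (show n ∈ {n | 2 ^ k ≤ ‖u n‖₊} from hk_le),
    ← ENNReal.mul_rpow_of_nonneg _ _ hq.le]
  exact ENNReal.rpow_le_rpow double hq.le

variable [AddGroup G]

lemma card_le_two_mul_card_filter_nnnorm_lt (u : G → E) {x : ℝ≥0} (hx : x ≠ 0) {B : Finset G}
    (hB : 8 * eMass u ≤ B.card * (x : ℝ≥0∞) ^ 2) (n : G) :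
    B.card ≤ 2 * (B.filter fun h => ‖u (n + h)‖₊ < x / 2).card := by
  set small := B.filter fun h => ‖u (n + h)‖₊ < x / 2
  set large := B.filter fun h => ¬ ‖u (n + h)‖₊ < x / 2
  have markov : large.card * ((x / 2 : ℝ≥0) : ℝ≥0∞) ^ 2 ≤ eMass u := by
    calc large.card * ((x / 2 : ℝ≥0) : ℝ≥0∞) ^ 2
        = ∑ _h ∈ large, ((x / 2 : ℝ≥0) : ℝ≥0∞) ^ 2 := by rw [Finset.sum_const, nsmul_eq_mul]
      _ ≤ ∑ h ∈ large, ‖u (n + h)‖ₑ ^ 2 := Finset.sum_le_sum fun h hh =>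
          pow_le_pow_left' (ENNReal.coe_le_coe.mpr (not_lt.mp (Finset.mem_filter.mp hh).2)) 2
      _ ≤ ∑' h, ‖u (n + h)‖ₑ ^ 2 := ENNReal.sum_le_tsum large
      _ = eMass u := eMass_translate u n
  have half : (8 : ℝ≥0∞) * ((x / 2 : ℝ≥0) : ℝ≥0∞) ^ 2 = 2 * (x : ℝ≥0∞) ^ 2 := by
    norm_cast
    rw [div_pow]
    ring
  have few_large : ((2 * large.card : ℕ) : ℝ≥0∞) ≤ B.card := by
    have hx2 : (x : ℝ≥0∞) ^ 2 ≠ 0 := by simpa using hx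
    rw [← ENNReal.mul_le_mul_iff_left hx2 (by finiteness)]
    calc ((2 * large.card : ℕ) : ℝ≥0∞) * (x : ℝ≥0∞) ^ 2
        = 8 * (large.card * ((x / 2 : ℝ≥0) : ℝ≥0∞) ^ 2) := by
          rw [mul_left_comm, half]; push_cast; ring
      _ ≤ 8 * eMass u := mul_le_mul_right markov _
      _ ≤ B.card * (x : ℝ≥0∞) ^ 2 := hB
  have split : small.card + large.card = B.card := Finset.card_filter_add_card_filter_not _
  have : 2 * large.card ≤ B.card := by exact_mod_cast few_large
  omega

lemma enorm_slab_sub_eq {x a b : ℝ≥0} (ha : x ≤ a) (hb : b < x / 2) :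
    ‖slab x b - slab x a‖ₑ = ((x / 2 : ℝ≥0) : ℝ≥0∞) := by
  have ha' : (x : ℝ) ≤ a := ha
  have hb' : (b : ℝ) < x / 2 := hb
  have diff : slab x b - slab x a = -((x / 2 : ℝ≥0) : ℝ) := by
    have : (0 : ℝ) ≤ x := x.2
    rw [slab, slab, min_eq_left (by linarith), min_eq_left hb'.le, min_eq_right ha',
      min_eq_right (by linarith), NNReal.coe_div, NNReal.coe_ofNat]
    ring
  rw [diff, enorm_neg, enorm_eq_nnnorm, NNReal.nnnorm_eq]

lemma card_mul_sq_le_sum_enorm_slab_sub_sq (u : G → E) {x : ℝ≥0} (hx : x ≠ 0) {B : Finset G}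
    (hB : 8 * eMass u ≤ B.card * (x : ℝ≥0∞) ^ 2) {n : G} (hn : x ≤ ‖u n‖₊) :
    B.card * (x : ℝ≥0∞) ^ 2 ≤ 8 * ∑ h ∈ B, ‖slab x ‖u (n + h)‖ - slab x ‖u n‖‖ₑ ^ 2 := by
  set small := B.filter fun h => ‖u (n + h)‖₊ < x / 2
  have many_small : (B.card : ℝ≥0∞) ≤ 2 * small.card := by
    exact_mod_cast card_le_two_mul_card_filter_nnnorm_lt u hx hB n
  calc B.card * (x : ℝ≥0∞) ^ 2 ≤ 2 * small.card * (x : ℝ≥0∞) ^ 2 :=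
        mul_le_mul_left many_small _
    _ = 8 * ∑ _h ∈ small, ((x / 2 : ℝ≥0) : ℝ≥0∞) ^ 2 := by
        have half : (x : ℝ≥0∞) ^ 2 = 4 * ((x / 2 : ℝ≥0) : ℝ≥0∞) ^ 2 := by
          norm_cast
          rw [div_pow]
          ring
        rw [half, Finset.sum_const, nsmul_eq_mul]
        ring
    _ = 8 * ∑ h ∈ small, ‖slab x ‖u (n + h)‖ - slab x ‖u n‖‖ₑ ^ 2 := by
        congr 1
        refine Finset.sum_congr rfl fun h hh => ?_
        rw [← coe_nnnorm, ← coe_nnnorm, enorm_slab_sub_eq hn (Finset.mem_filter.mp hh).2]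
    _ ≤ 8 * ∑ h ∈ B, ‖slab x ‖u (n + h)‖ - slab x ‖u n‖‖ₑ ^ 2 := by
        gcongr
        exact Finset.filter_subset _ _

/-- The scale-`t` averages of `shiftEnergy` over some set of at least `t` jumps are bounded by
`C t ^ σ` times the energy of `w`. For a kernel of order `α < 2` on `ℤ^d` this holds with
`σ = α / d`, the sets being cubes of side about `t ^ (1 / d)`. -/
def HasPseudoPoincare (w : G → ℝ≥0∞) (σ : ℝ) (C : ℝ≥0∞) : Prop :=
  ∀ t : ℝ≥0, 1 ≤ t → ∃ B : Finset G, (t : ℝ≥0∞) ≤ B.card ∧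
    ∀ v : G → ℝ, ∑ h ∈ B, shiftEnergy v h ≤ B.card * (C * (t : ℝ≥0∞) ^ σ * jumpEnergy w v)

lemma sq_mul_encard_superlevel_le {w : G → ℝ≥0∞} {σ : ℝ} {C : ℝ≥0∞}
    (hw : HasPseudoPoincare w σ C) (u : G → E) {x t : ℝ≥0} (hx : x ≠ 0) (ht : 1 ≤ t)
    (htx : 8 * eMass u = t * (x : ℝ≥0∞) ^ 2) :
    (x : ℝ≥0∞) ^ 2 * {n | x ≤ ‖u n‖₊}.encard ≤
      8 * (C * (t : ℝ≥0∞) ^ σ * jumpEnergy w fun n => slab x ‖u n‖) := by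
  obtain ⟨B, htB, hB⟩ := hw t ht
  have hB0 : (B.card : ℝ≥0∞) ≠ 0 :=
    (lt_of_lt_of_le (by exact_mod_cast zero_lt_one.trans_le ht) htB).ne'
  have hBx : 8 * eMass u ≤ B.card * (x : ℝ≥0∞) ^ 2 := htx.trans_le (mul_le_mul_left htB _)
  rw [← ENNReal.mul_le_mul_iff_right hB0 (ENNReal.natCast_ne_top _)]
  calc B.card * ((x : ℝ≥0∞) ^ 2 * {n | x ≤ ‖u n‖₊}.encard)
      = ∑' _n : {n | x ≤ ‖u n‖₊}, B.card * (x : ℝ≥0∞) ^ 2 := by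
        rw [ENNReal.tsum_set_const]; ring
    _ ≤ ∑' n : {n | x ≤ ‖u n‖₊}, 8 * ∑ h ∈ B, ‖slab x ‖u (n + h)‖ - slab x ‖u n‖‖ₑ ^ 2 :=
        ENNReal.tsum_le_tsum fun n => card_mul_sq_le_sum_enorm_slab_sub_sq u hx hBx n.2
    _ ≤ ∑' n, 8 * ∑ h ∈ B, ‖slab x ‖u (n + h)‖ - slab x ‖u n‖‖ₑ ^ 2 :=
        ENNReal.tsum_comp_le_tsum_of_injective Subtype.val_injective _
    _ = 8 * ∑ h ∈ B, shiftEnergy (fun n => slab x ‖u n‖) h := by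
        rw [ENNReal.tsum_mul_left, Summable.tsum_finsetSum fun _ _ => ENNReal.summable]
        rfl
    _ ≤ 8 * (B.card * (C * (t : ℝ≥0∞) ^ σ * jumpEnergy w fun n => slab x ‖u n‖)) :=
        mul_le_mul_right (hB _) _
    _ = B.card * (8 * (C * (t : ℝ≥0∞) ^ σ * jumpEnergy w fun n => slab x ‖u n‖)) :=
        mul_left_comm _ _ _

lemma rpow_mul_encard_superlevel_le {w : G → ℝ≥0∞} {σ : ℝ} (hσ : 0 ≤ σ) {C : ℝ≥0∞}
    (hw : HasPseudoPoincare w σ C) {u : G → E} (hu : eMass u ≠ ∞) {x : ℝ≥0} (hx : x ≠ 0) :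
    (x : ℝ≥0∞) ^ (2 + 2 * σ) * {n | x ≤ ‖u n‖₊}.encard ≤
      8 * (8 * eMass u) ^ σ * C * jumpEnergy w fun n => slab x ‖u n‖ := by
  rcases {n | x ≤ ‖u n‖₊}.eq_empty_or_nonempty with hempty | ⟨n, hn⟩
  · simp [hempty]
  have hxM : (x : ℝ≥0∞) ^ 2 ≤ eMass u :=
    (pow_le_pow_left' (ENNReal.coe_le_coe.mpr hn) 2).trans (ENNReal.le_tsum n)
  -- At this scale, Markov's inequality makes `‖u‖ < x / 2` on at least half of every set of `t`
  -- sites, so `u` drops below `x / 2` along at least half of the jumps from a site of level `x`.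
  obtain ⟨t, ht, htx⟩ : ∃ t : ℝ≥0, 1 ≤ t ∧ 8 * eMass u = t * (x : ℝ≥0∞) ^ 2 := by
    lift eMass u to ℝ≥0 using hu with M
    norm_cast at hxM ⊢
    refine ⟨8 * M / x ^ 2, ?_, by field_simp⟩
    rw [one_le_div₀ (by positivity)]
    exact hxM.trans (le_mul_of_one_le_left zero_le (by norm_num))
  have split_exponent : (x : ℝ≥0∞) ^ (2 + 2 * σ) = ((x : ℝ≥0∞) ^ 2) ^ σ * (x : ℝ≥0∞) ^ 2 := by
    rw [ENNReal.rpow_add_of_nonneg _ _ zero_le_two (by positivity), ENNReal.rpow_mul,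
      ENNReal.rpow_ofNat, mul_comm]
  calc (x : ℝ≥0∞) ^ (2 + 2 * σ) * {n | x ≤ ‖u n‖₊}.encard
      = ((x : ℝ≥0∞) ^ 2) ^ σ * ((x : ℝ≥0∞) ^ 2 * {n | x ≤ ‖u n‖₊}.encard) := by
        rw [split_exponent, mul_assoc]
    _ ≤ ((x : ℝ≥0∞) ^ 2) ^ σ *
          (8 * (C * (t : ℝ≥0∞) ^ σ * jumpEnergy w fun n => slab x ‖u n‖)) :=
        mul_le_mul_right (sq_mul_encard_superlevel_le hw u hx ht htx) _
    _ = 8 * (8 * eMass u) ^ σ * C * jumpEnergy w fun n => slab x ‖u n‖ := by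
        rw [htx, ENNReal.mul_rpow_of_nonneg _ _ hσ]; ring

theorem tsum_enorm_rpow_le_of_hasPseudoPoincare {w : G → ℝ≥0∞} {σ : ℝ} (hσ : 0 ≤ σ) {C : ℝ≥0∞}
    (hw : HasPseudoPoincare w σ C) {u : G → E} (hu : eMass u ≠ ∞) :
    ∑' n, ‖u n‖ₑ ^ (2 + 2 * σ) ≤
      2 ^ (2 + 2 * σ) * (8 * (8 * eMass u) ^ σ * C * jumpEnergy w u) := by
  calc ∑' n, ‖u n‖ₑ ^ (2 + 2 * σ)
      ≤ ∑' n, ∑' k : ℤ, {n | 2 ^ k ≤ ‖u n‖₊}.indicator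
          (fun _ => 2 ^ (2 + 2 * σ) * ((2 ^ k : ℝ≥0) : ℝ≥0∞) ^ (2 + 2 * σ)) n :=
        ENNReal.tsum_le_tsum fun n => enorm_rpow_le_tsum_indicator u (by positivity) n
    _ = 2 ^ (2 + 2 * σ) * ∑' k : ℤ,
          ((2 ^ k : ℝ≥0) : ℝ≥0∞) ^ (2 + 2 * σ) * {n | 2 ^ k ≤ ‖u n‖₊}.encard := by
        rw [ENNReal.tsum_comm, ← ENNReal.tsum_mul_left]
        refine tsum_congr fun k => ?_
        rw [← tsum_subtype, ENNReal.tsum_set_const]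
        ring
    _ ≤ 2 ^ (2 + 2 * σ) * ∑' k : ℤ,
          8 * (8 * eMass u) ^ σ * C * jumpEnergy w fun n => slab (2 ^ k) ‖u n‖ := by
        refine mul_le_mul_right (ENNReal.tsum_le_tsum fun k => ?_) _
        simpa only [NNReal.coe_zpow, NNReal.coe_ofNat] using
          rpow_mul_encard_superlevel_le hσ hw hu (zpow_ne_zero k two_ne_zero)
    _ ≤ 2 ^ (2 + 2 * σ) * (8 * (8 * eMass u) ^ σ * C * jumpEnergy w u) := by
        rw [ENNReal.tsum_mul_left]
        gcongr
        exact tsum_jumpEnergy_slab_le w u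

theorem exists_tsum_enorm_rpow_le {w : G → ℝ≥0∞} {σ : ℝ} (hσ : 0 ≤ σ) {C : ℝ≥0∞} (hC : C ≠ ∞)
    (hw : HasPseudoPoincare w σ C) {p : ℝ} (hp : 1 + 2 * σ ≤ p) :
    ∃ K : ℝ≥0, ∀ u : G → E, eMass u ≠ ∞ →
      ∑' n, ‖u n‖ₑ ^ (p + 1) ≤ K * eMass u ^ ((p - 1) / 2) * jumpEnergy w u := by
  have hK : (2 : ℝ≥0∞) ^ (2 + 2 * σ) * (8 * 8 ^ σ * C) ≠ ∞ := by finiteness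
  refine ⟨((2 : ℝ≥0∞) ^ (2 + 2 * σ) * (8 * 8 ^ σ * C)).toNNReal, fun u hu => ?_⟩
  rw [ENNReal.coe_toNNReal hK]
  calc ∑' n, ‖u n‖ₑ ^ (p + 1)
      ≤ eMass u ^ ((p + 1 - (2 + 2 * σ)) / 2) * ∑' n, ‖u n‖ₑ ^ (2 + 2 * σ) :=
        tsum_enorm_rpow_le_eMass_rpow_mul u (by positivity) (by linarith)
    _ ≤ eMass u ^ ((p + 1 - (2 + 2 * σ)) / 2) *
          (2 ^ (2 + 2 * σ) * (8 * (8 * eMass u) ^ σ * C * jumpEnergy w u)) :=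
        mul_le_mul_right (tsum_enorm_rpow_le_of_hasPseudoPoincare hσ hw hu) _
    _ = 2 ^ (2 + 2 * σ) * (8 * 8 ^ σ * C) *
          (eMass u ^ ((p + 1 - (2 + 2 * σ)) / 2) * eMass u ^ σ) * jumpEnergy w u := by
        rw [ENNReal.mul_rpow_of_nonneg _ _ hσ]; ring
    _ = 2 ^ (2 + 2 * σ) * (8 * 8 ^ σ * C) * eMass u ^ ((p - 1) / 2) * jumpEnergy w u := by
        rw [← ENNReal.rpow_add_of_nonneg _ _ (by linarith) hσ]
        ring_nf

end GagliardoNirenberg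

section Lattice

/-- The jump kernel `h ↦ J_{|h|}`, `h ≠ 0`, whose Dirichlet form is `pairing d J`. -/
def latKernel (d : ℕ) (J : ℕ → ℝ) (h : Fin d → ℤ) : ℝ≥0∞ := ENNReal.ofReal (JbarSummand d J h)

/-- The discrete cube `[K, K + R)^d`. -/
def latCube (d K R : ℕ) : Finset (Fin d → ℤ) := Fintype.piFinset fun _ => Finset.Ico (K : ℤ) (K + R)

variable {d : ℕ} {J : ℕ → ℝ}

lemma latKernel_of_ne_zero {h : Fin d → ℤ} (hh : h ≠ 0) :
    latKernel d J h = ENNReal.ofReal (J (latNorm h)) := by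
  rw [latKernel, JbarSummand, if_neg hh]

lemma mem_latCube {K R : ℕ} {h : Fin d → ℤ} :
    h ∈ latCube d K R ↔ ∀ i, (K : ℤ) ≤ h i ∧ h i < K + R := by
  simp only [latCube, Fintype.mem_piFinset, Finset.mem_Ico]

lemma card_latCube (d K R : ℕ) : (latCube d K R).card = R ^ d := by
  simp [latCube]

lemma le_latNorm_of_mem_latCube (hd : 1 ≤ d) {K R : ℕ} {h : Fin d → ℤ} (hh : h ∈ latCube d K R) :
    K ≤ latNorm h := by
  have := mem_latCube.mp hh ⟨0, hd⟩
  calc K ≤ (h ⟨0, hd⟩).natAbs := by omega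
    _ ≤ latNorm h := Finset.le_sup (f := fun i => (h i).natAbs) (Finset.mem_univ _)

lemma latNorm_le_of_mem_latCube {K R : ℕ} {h : Fin d → ℤ} (hh : h ∈ latCube d K R) :
    latNorm h ≤ K + R :=
  Finset.sup_le fun i _ => by have := mem_latCube.mp hh i; omega

lemma hasPseudoPoincare_of_card_eq_pow {G : Type*} [AddGroup G] {w : G → ℝ≥0∞} (hd : d ≠ 0)
    {a : ℝ} (ha : 0 ≤ a) {C : ℝ≥0∞}
    (hw : ∀ R : ℕ, 1 ≤ R → ∃ B : Finset G, B.card = R ^ d ∧ ∀ v : G → ℝ,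
      ∑ h ∈ B, shiftEnergy v h ≤ B.card * (C * (R : ℝ≥0∞) ^ a * jumpEnergy w v)) :
    HasPseudoPoincare w (a / d) (C * 2 ^ a) := by
  intro t ht
  set s : ℝ≥0 := t ^ (1 / d : ℝ)
  have hs : 1 ≤ s := NNReal.one_le_rpow ht (by positivity)
  have hsd : s ^ d = t := by
    rw [← NNReal.rpow_natCast, ← NNReal.rpow_mul, one_div_mul_cancel (by exact_mod_cast hd),
      NNReal.rpow_one]
  obtain ⟨B, hcard, hB⟩ := hw ⌈s⌉₊ (Nat.one_le_ceil_iff.mpr (zero_lt_one.trans_le hs))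
  have scale : (⌈s⌉₊ : ℝ≥0∞) ^ a ≤ 2 ^ a * (t : ℝ≥0∞) ^ (a / d) := by
    have ceil_le : (⌈s⌉₊ : ℝ≥0) ≤ 2 * s := by
      exact (Nat.ceil_lt_add_one zero_le).le.trans (by rw [two_mul]; gcongr)
    calc (⌈s⌉₊ : ℝ≥0∞) ^ a ≤ (2 * (s : ℝ≥0∞)) ^ a :=
          ENNReal.rpow_le_rpow (by exact_mod_cast ceil_le) ha
      _ = 2 ^ a * (t : ℝ≥0∞) ^ (a / d) := by
          rw [ENNReal.mul_rpow_of_nonneg _ _ ha, ENNReal.coe_rpow_of_nonneg _ (by positivity),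
            ← ENNReal.rpow_mul, one_div_mul_eq_div]
  refine ⟨B, ?_, fun v => (hB v).trans ?_⟩
  · rw [hcard, ← hsd]
    exact_mod_cast pow_le_pow_left' (Nat.le_ceil s) d
  · refine mul_le_mul_right (mul_le_mul_left ?_ _) _
    exact (mul_le_mul_right scale C).trans_eq (mul_assoc _ _ _).symm

lemma one_le_mul_latKernel (hd : 1 ≤ d) {a c : ℝ} (ha : 0 ≤ a) (hc : 0 < c) {K : ℕ} (hK : 1 ≤ K)
    (hJ : ∀ k : ℕ, K ≤ k → c ≤ (k : ℝ) ^ (d + a) * J k) {R : ℕ} {h : Fin d → ℤ}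
    (hh : h ∈ latCube d K R) :
    1 ≤ (R : ℝ≥0∞) ^ d * (ENNReal.ofReal ((K + 1) ^ (d + a) / c) * (R : ℝ≥0∞) ^ a) *
      latKernel d J h := by
  have corner := mem_latCube.mp hh ⟨0, hd⟩
  have hR : 1 ≤ R := by omega
  have hR_pos : (0 : ℝ) < R := by exact_mod_cast hR
  have h_ne : h ≠ 0 := by
    rintro rfl
    rw [Pi.zero_apply] at corner
    omega
  have tail := hJ _ (le_latNorm_of_mem_latCube hd hh)
  have hJ_nonneg : 0 ≤ J (latNorm h) := by
    by_contra! hneg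
    exact hc.not_ge (tail.trans (mul_nonpos_of_nonneg_of_nonpos (by positivity) hneg.le))
  have norm_le : (latNorm h : ℝ) ≤ (K + 1) * R := by
    have : latNorm h ≤ (K + 1) * R := (latNorm_le_of_mem_latCube hh).trans (by nlinarith)
    exact_mod_cast this
  have real_bound : 1 ≤ (R : ℝ) ^ d * ((K + 1) ^ (d + a) / c * (R : ℝ) ^ a) * J (latNorm h) := by
    calc 1 ≤ (latNorm h : ℝ) ^ (d + a) * J (latNorm h) / c := (one_le_div hc).mpr tail
      _ ≤ ((K + 1) * R : ℝ) ^ (d + a) * J (latNorm h) / c := by gcongr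
      _ = (R : ℝ) ^ d * ((K + 1) ^ (d + a) / c * (R : ℝ) ^ a) * J (latNorm h) := by
          rw [Real.mul_rpow (by positivity) hR_pos.le, Real.rpow_add hR_pos, Real.rpow_natCast]
          ring
  have := ENNReal.ofReal_le_ofReal real_bound
  rwa [ENNReal.ofReal_one, ENNReal.ofReal_mul (by positivity), ENNReal.ofReal_mul (by positivity),
    ENNReal.ofReal_mul (by positivity), ← ENNReal.ofReal_rpow_of_pos hR_pos,
    ENNReal.ofReal_pow hR_pos.le, ENNReal.ofReal_natCast, ← latKernel_of_ne_zero h_ne] at this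

lemma exists_hasPseudoPoincare_of_heavy_tail (hd : 1 ≤ d) {a c : ℝ} (ha : 0 ≤ a) (hc : 0 < c)
    (hJ : ∀ᶠ k : ℕ in atTop, c ≤ (k : ℝ) ^ (d + a) * J k) :
    ∃ C ≠ ∞, HasPseudoPoincare (latKernel d J) (a / d) C := by
  obtain ⟨N, hN⟩ := eventually_atTop.mp hJ
  have tail : ∀ k : ℕ, N + 1 ≤ k → c ≤ (k : ℝ) ^ (d + a) * J k := fun k hk => hN k (by omega)
  refine ⟨_, by finiteness, hasPseudoPoincare_of_card_eq_pow (by omega) ha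
    (C := ENNReal.ofReal (((N + 1 : ℕ) + 1) ^ (d + a) / c)) fun R _ => ⟨latCube d (N + 1) R,
      card_latCube _ _ _, fun v => ?_⟩⟩
  rw [card_latCube, ← mul_assoc, Nat.cast_pow]
  exact sum_shiftEnergy_le (fun h hh => one_le_mul_latKernel hd ha hc (by omega) tail hh) v

lemma shiftEnergy_le_inv_mul_jumpEnergy {k : ℕ} (hJ : 0 < J k) {E : Type*}
    [SeminormedAddCommGroup E] (u : (Fin d → ℤ) → E) {h : Fin d → ℤ}
    (hh : h = 0 ∨ latNorm h = k) :
    shiftEnergy u h ≤ (ENNReal.ofReal (J k))⁻¹ * jumpEnergy (latKernel d J) u := by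
  rcases eq_or_ne h 0 with rfl | h_ne
  · simp [shiftEnergy, enorm_eq_nnnorm]
  have hk : latNorm h = k := hh.resolve_left h_ne
  rw [← ENNReal.div_eq_inv_mul, ENNReal.le_div_iff_mul_le (by simp [hJ]) (by simp), mul_comm,
    ← hk, ← latKernel_of_ne_zero h_ne]
  exact ENNReal.le_tsum h

lemma eq_zero_or_latNorm_eq {k : ℕ} {h : Fin d → ℤ} (hh : ∀ i, h i = 0 ∨ h i = k) :
    h = 0 ∨ latNorm h = k := by
  refine or_iff_not_imp_left.mpr fun h_ne => ?_
  obtain ⟨i, hi⟩ := Function.ne_iff.mp h_ne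
  refine le_antisymm (Finset.sup_le fun j _ => ?_) ?_
  · rcases hh j with hj | hj <;> simp [hj]
  · calc k = (h i).natAbs := by rw [(hh i).resolve_left hi, Int.natAbs_natCast]
      _ ≤ latNorm h := Finset.le_sup (f := fun i => (h i).natAbs) (Finset.mem_univ i)

lemma shiftEnergy_smul_le {k : ℕ} (hJ : 0 < J k) {E : Type*} [SeminormedAddCommGroup E]
    (u : (Fin d → ℤ) → E) {R : ℕ} {h : Fin d → ℤ} (hh : h ∈ latCube d 0 R) :
    shiftEnergy u ((k : ℤ) • h) ≤
      (ENNReal.ofReal (J k))⁻¹ * (R : ℝ≥0∞) ^ 2 * jumpEnergy (latKernel d J) u := by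
  -- The steps of this path lie in `{0, k} ^ d`, so each is null or has length exactly `k`.
  let path : ℕ → Fin d → ℤ := fun j i => k * min (h i) j
  have hbox := mem_latCube.mp hh
  have path_zero : path 0 = 0 := by
    ext i
    have : min (h i) ((0 : ℕ) : ℤ) = 0 := min_eq_right (hbox i).1
    simp only [path, this, mul_zero, Pi.zero_apply]
  have path_end : path R = (k : ℤ) • h := by
    ext i
    have := hbox i
    simp only [path, Pi.smul_apply, smul_eq_mul]
    rw [min_eq_left (by omega)]
  have step (j : ℕ) : shiftEnergy u (-path j + path (j + 1)) ≤
      (ENNReal.ofReal (J k))⁻¹ * jumpEnergy (latKernel d J) u := by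
    refine shiftEnergy_le_inv_mul_jumpEnergy hJ u (eq_zero_or_latNorm_eq fun i => ?_)
    simp only [path, Pi.add_apply, Pi.neg_apply]
    rcases le_or_gt (h i) j with hij | hij
    · left
      rw [min_eq_left hij, min_eq_left (by push_cast; omega), neg_add_cancel]
    · right
      rw [min_eq_right hij.le, min_eq_right (by push_cast; omega)]
      push_cast
      ring
  calc shiftEnergy u ((k : ℤ) • h)
      ≤ R * ∑ j ∈ Finset.range R, shiftEnergy u (-path j + path (j + 1)) :=
        path_end ▸ shiftEnergy_le_of_path u path_zero R
    _ ≤ R * ∑ _j ∈ Finset.range R,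
          (ENNReal.ofReal (J k))⁻¹ * jumpEnergy (latKernel d J) u := by
        gcongr with j
        exact step j
    _ = (ENNReal.ofReal (J k))⁻¹ * (R : ℝ≥0∞) ^ 2 * jumpEnergy (latKernel d J) u := by
        rw [Finset.sum_const, Finset.card_range, nsmul_eq_mul]
        ring

lemma hasPseudoPoincare_of_pos (hd : 1 ≤ d) {k : ℕ} (hk : k ≠ 0) (hJ : 0 < J k) :
    HasPseudoPoincare (latKernel d J) (2 / d) ((ENNReal.ofReal (J k))⁻¹ * 2 ^ (2 : ℝ)) := by
  refine hasPseudoPoincare_of_card_eq_pow (by omega) zero_le_two fun R _ => ?_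
  have smul_injective : Function.Injective fun h : Fin d → ℤ => (k : ℤ) • h :=
    smul_right_injective _ (by exact_mod_cast hk)
  refine ⟨(latCube d 0 R).map ⟨_, smul_injective⟩, by rw [Finset.card_map, card_latCube],
    fun v => ?_⟩
  rw [Finset.sum_map, Finset.card_map, ENNReal.rpow_ofNat, ← nsmul_eq_mul]
  exact Finset.sum_le_card_nsmul _ _ _ fun h hh => shiftEnergy_smul_le hJ v hh

end Lattice

section Threshold

variable {d : ℕ} {J : ℕ → ℝ} {p : ℝ}

lemma latNorm_neg (m : Fin d → ℤ) : latNorm (-m) = latNorm m := by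
  simp only [latNorm, Pi.neg_apply, Int.natAbs_neg]

lemma JbarSummand_nonneg (hJ : ∀ k, 0 ≤ J k) (m : Fin d → ℤ) : 0 ≤ JbarSummand d J m := by
  unfold JbarSummand
  split_ifs
  exacts [le_rfl, hJ _]

lemma eMass_ne_top {u : (Fin d → ℤ) → ℂ} (hu : MemL2 d u) : eMass u ≠ ∞ := by
  simpa only [eMass, ENNReal.ofReal_pow (norm_nonneg _), ofReal_norm] using hu.tsum_ofReal_ne_top

lemma mass_eq_toReal (u : (Fin d → ℤ) → ℂ) : mass d u = (eMass u).toReal := by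
  rw [eMass, ENNReal.tsum_toReal_eq fun n => by finiteness]
  simp only [mass, ENNReal.toReal_pow, toReal_enorm]

lemma ppot_eq_toReal (hp : 0 ≤ p + 1) (u : (Fin d → ℤ) → ℂ) :
    ppot d p u = (∑' n, ‖u n‖ₑ ^ (p + 1)).toReal := by
  rw [ENNReal.tsum_toReal_eq fun n => by finiteness]
  simp only [ppot, ← ENNReal.toReal_rpow, toReal_enorm]

lemma pairing_eq_toReal (hJ : ∀ k, 0 ≤ J k) (hJbar : Summable (JbarSummand d J))
    {u : (Fin d → ℤ) → ℂ} (hu : MemL2 d u) :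
    pairing d J u = (1 / 2) * (jumpEnergy (latKernel d J) u).toReal := by
  have by_sites : jumpEnergy (latKernel d J) u =
      ∑' n, ∑' h, latKernel d J h * ‖u (n + h) - u n‖ₑ ^ 2 := by
    simp only [jumpEnergy, shiftEnergy, ← ENNReal.tsum_mul_left]
    exact ENNReal.tsum_comm
  have finite : ∑' n, ∑' h, latKernel d J h * ‖u (n + h) - u n‖ₑ ^ 2 ≠ ∞ :=
    by_sites ▸ jumpEnergy_ne_top hJbar.tsum_ofReal_ne_top (eMass_ne_top hu)
  rw [pairing, by_sites, ENNReal.tsum_toReal_eq (ENNReal.ne_top_of_tsum_ne_top finite)]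
  congr 1
  refine tsum_congr fun n => ?_
  rw [ENNReal.tsum_toReal_eq
    (ENNReal.ne_top_of_tsum_ne_top (ENNReal.ne_top_of_tsum_ne_top finite n)),
    ← (Equiv.addLeft n).tsum_eq]
  refine tsum_congr fun h => ?_
  rw [ENNReal.toReal_mul, ENNReal.toReal_pow, toReal_enorm, latKernel,
    ENNReal.toReal_ofReal (JbarSummand_nonneg hJ h), Equiv.coe_addLeft, sub_add_cancel_left,
    latNorm_neg, norm_sub_rev, JbarSummand, ite_mul, zero_mul]
  simp only [add_eq_left]

lemma pairing_nonneg (hJ : ∀ k, 0 ≤ J k) (u : (Fin d → ℤ) → ℂ) : 0 ≤ pairing d J u := by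
  refine mul_nonneg one_half_pos.le (tsum_nonneg fun n => tsum_nonneg fun m => ?_)
  have := hJ (latNorm (n - m))
  positivity

theorem exists_ppot_le_of_hasPseudoPoincare (hJ : ∀ k, 0 ≤ J k)
    (hJbar : Summable (JbarSummand d J)) {σ : ℝ} (hσ : 0 ≤ σ) {A : ℝ≥0∞} (hA : A ≠ ∞)
    (hw : HasPseudoPoincare (latKernel d J) σ A) (hp : 1 + 2 * σ ≤ p) :
    ∃ C : ℝ, 0 < C ∧ ∀ u : (Fin d → ℤ) → ℂ, MemL2 d u →
      ppot d p u ≤ C * (mass d u) ^ ((p - 1) / 2) * pairing d J u := by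
  obtain ⟨K, hK⟩ := exists_tsum_enorm_rpow_le (E := ℂ) hσ hA hw hp
  refine ⟨2 * K + 1, by positivity, fun u hu => ?_⟩
  have mass_finite := eMass_ne_top hu
  have energy_finite : jumpEnergy (latKernel d J) u ≠ ∞ :=
    jumpEnergy_ne_top hJbar.tsum_ofReal_ne_top mass_finite
  have exponent_nonneg : 0 ≤ (p - 1) / 2 := by linarith
  have hpairing := pairing_nonneg hJ u
  have mass_nonneg : 0 ≤ mass d u := tsum_nonneg fun n => sq_nonneg _
  calc ppot d p u = (∑' n, ‖u n‖ₑ ^ (p + 1)).toReal := ppot_eq_toReal (by linarith) u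
    _ ≤ (K * eMass u ^ ((p - 1) / 2) * jumpEnergy (latKernel d J) u).toReal :=
        ENNReal.toReal_mono (by finiteness) (hK u mass_finite)
    _ = 2 * K * (mass d u) ^ ((p - 1) / 2) * pairing d J u := by
        rw [ENNReal.toReal_mul, ENNReal.toReal_mul, ← ENNReal.toReal_rpow, ← mass_eq_toReal,
          ENNReal.coe_toReal, pairing_eq_toReal hJ hJbar hu]
        ring
    _ ≤ (2 * K + 1) * (mass d u) ^ ((p - 1) / 2) * pairing d J u := by
        gcongr
        linarith

lemma gNineq_of_ppot_le (hp : 1 < p) {C : ℝ} (hC : 0 < C)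
    (h : ∀ u : (Fin d → ℤ) → ℂ, MemL2 d u →
      ppot d p u ≤ C * (mass d u) ^ ((p - 1) / 2) * pairing d J u) :
    GNineq d J p ((2 * C / (p + 1)) ^ (-2 / (p - 1))) := by
  have hp_sub : p - 1 ≠ 0 := by linarith
  have constant :
      (p + 1) / 2 * ((2 * C / (p + 1)) ^ (-2 / (p - 1))) ^ (-(p - 1) / 2) = C := by
    rw [← Real.rpow_mul (by positivity),
      show -2 / (p - 1) * (-(p - 1) / 2) = 1 by field_simp, Real.rpow_one]
    field_simp
  exact fun q hq => constant.symm ▸ h q hq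

lemma memL2_single : MemL2 d (Pi.single 0 1) :=
  summable_of_ne_finset_zero (s := {0}) fun n hn => by
    rw [Pi.single_eq_of_ne (by simpa using hn), norm_zero, sq, zero_mul]

lemma mass_single : mass d (Pi.single 0 1) = 1 := by
  rw [mass, tsum_eq_single 0 fun n hn => by simp [hn]]
  simp

lemma ppot_single (hp : p + 1 ≠ 0) : ppot d p (Pi.single 0 1) = 1 := by
  rw [ppot, tsum_eq_single 0 fun n hn => by simp [hn, hp]]
  simp

lemma bddAbove_gNineq (hp : 1 < p) : BddAbove {ν : ℝ | 0 < ν ∧ GNineq d J p ν} := by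
  have hp_sub : 0 < p - 1 := by linarith
  set P := pairing d J (Pi.single 0 1)
  refine ⟨((p + 1) / 2 * P) ^ (2 / (p - 1)), fun ν ⟨hν, hGN⟩ => ?_⟩
  have test : 1 ≤ (p + 1) / 2 * (ν ^ ((p - 1) / 2))⁻¹ * P := by
    have := hGN _ memL2_single
    rwa [mass_single, ppot_single (by linarith), Real.one_rpow, mul_one, neg_div,
      Real.rpow_neg hν.le] at this
  have power_le : ν ^ ((p - 1) / 2) ≤ (p + 1) / 2 * P := by
    have : 0 < ν ^ ((p - 1) / 2) := by positivity
    rw [mul_right_comm, ← div_eq_mul_inv, one_le_div this] at test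
    exact test
  calc ν = (ν ^ ((p - 1) / 2)) ^ (2 / (p - 1)) := by
        rw [← Real.rpow_mul hν.le, show (p - 1) / 2 * (2 / (p - 1)) = 1 by field_simp,
          Real.rpow_one]
    _ ≤ ((p + 1) / 2 * P) ^ (2 / (p - 1)) := by gcongr

lemma nuZero_pos_of_ppot_le (hp : 1 < p) {C : ℝ} (hC : 0 < C)
    (h : ∀ u : (Fin d → ℤ) → ℂ, MemL2 d u →
      ppot d p u ≤ C * (mass d u) ^ ((p - 1) / 2) * pairing d J u) :
    0 < nuZero d J p := by
  have hν : 0 < (2 * C / (p + 1)) ^ (-2 / (p - 1)) := by positivity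
  exact hν.trans_le <| le_csSup ((bddAbove_gNineq hp).insert 0)
    (Set.mem_insert_of_mem _ ⟨hν, gNineq_of_ppot_le hp hC h⟩)

lemma alphaPrime_pos {α : ℝ≥0∞} (hα : 0 < α) : 0 < alphaPrime α := by
  unfold alphaPrime
  split_ifs with h
  · exact half_pos (ENNReal.toReal_pos hα.ne' h.ne_top)
  · exact one_pos

lemma exists_hasPseudoPoincare_latKernel (hd : 1 ≤ d) (hJ : ∃ k ≠ 0, 0 < J k) {α : ℝ≥0∞}
    (htail : α < 2 → ∃ c > 0, ∀ᶠ k : ℕ in atTop, c ≤ (k : ℝ) ^ ((d : ℝ) + α.toReal) * J k) :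
    ∃ C ≠ ∞, HasPseudoPoincare (latKernel d J) (2 * alphaPrime α / d) C := by
  unfold alphaPrime
  split_ifs with h
  · obtain ⟨c, hc, hJc⟩ := htail h
    simpa only [mul_div_cancel₀ _ (two_ne_zero' ℝ)] using
      exists_hasPseudoPoincare_of_heavy_tail hd ENNReal.toReal_nonneg hc hJc
  · obtain ⟨k, hk, hJk⟩ := hJ
    have hJk' : ENNReal.ofReal (J k) ≠ 0 := by simpa using hJk
    rw [mul_one]
    exact ⟨_, by finiteness, hasPseudoPoincare_of_pos hd hk hJk⟩

lemma JOrder.exists_eventually_le {α : ℝ≥0∞} (h : JOrder d J α) (hα : α ≠ ∞) :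
    ∃ c > 0, ∀ᶠ k : ℕ in atTop, c ≤ (k : ℝ) ^ ((d : ℝ) + α.toReal) * J k := by
  rw [JOrder, if_neg hα] at h
  obtain ⟨A, hA, hlim⟩ := h
  exact ⟨A / 2, half_pos hA, hlim.eventually_const_le (half_lt_self hA)⟩

end Threshold

theorem stmt9_general (d : ℕ) (hd : 1 ≤ d) (p : ℝ) (J : ℕ → ℝ)
    (hJpos : ∀ k, 0 ≤ J k) (hJbar : Summable (JbarSummand d J)) (hJne : ∃ k ≠ 0, 0 < J k)
    (α : ℝ≥0∞) (hα : 0 < α)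
    (htail : α < 2 → ∃ c > 0, ∀ᶠ k : ℕ in atTop, c ≤ (k : ℝ) ^ ((d : ℝ) + α.toReal) * J k)
    (hpsup : 1 + 4 * alphaPrime α / d ≤ p) :
    0 < nuZero d J p ∧
      ∃ C : ℝ, 0 < C ∧ ∀ u : (Fin d → ℤ) → ℂ, MemL2 d u →
        ppot d p u ≤ C * (mass d u) ^ ((p - 1) / 2) * pairing d J u := by
  have hσ : 0 < 2 * alphaPrime α / d := by
    have := alphaPrime_pos hα
    positivity
  have hp : 1 + 2 * (2 * alphaPrime α / d) ≤ p := by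
    convert hpsup using 2
    ring
  obtain ⟨C, hC, hw⟩ := exists_hasPseudoPoincare_latKernel hd hJne htail
  obtain ⟨K, hK, hGN⟩ := exists_ppot_le_of_hasPseudoPoincare hJpos hJbar hσ.le hC hw hp
  exact ⟨nuZero_pos_of_ppot_le (by linarith) hK hGN, K, hK, hGN⟩

theorem stmt9 (d : ℕ) (hd : 1 ≤ d) (p : ℝ) (hp : 1 < p) (J : ℕ → ℝ)
    (hJpos : ∀ k, 0 ≤ J k) (hJbar : Summable (JbarSummand d J)) (hJ1 : 0 < J 1)
    (α : ℝ≥0∞) (hα : 0 < α) (horder : JOrder d J α)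
    (hpsup : 1 + 4 * alphaPrime α / d ≤ p) :
    0 < nuZero d J p ∧
      ∃ C : ℝ, 0 < C ∧ ∀ u : (Fin d → ℤ) → ℂ, MemL2 d u →
        ppot d p u ≤ C * (mass d u) ^ ((p - 1) / 2) * pairing d J u :=
  stmt9_general d hd p J hJpos hJbar ⟨1, one_ne_zero, hJ1⟩ α hα
    (fun h => horder.exists_eventually_le h.ne_top) hpsup
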